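/- Let $F_n$ be the free associative algebra over a field of characteristic zero generated by $x_1,\dots,x_n$ and $\mathfrak{f}_n \subset F_n$ the free Lie algebra on the same generators, so that $F_n = U(\mathfrak{f}_n)$ and the symmetrization $\mathrm{sym} : S(\mathfrak{f}_n) \to F_n$ is a linear isomorphism. Let $p_n : F_n \to \mathfrak{f}_n$ be the composition of $\mathrm{sym}^{-1}$ with the projection of $S(\mathfrak{f}_n) = \oplus_{k \geq 0} S^k(\mathfrak{f}_n)$ onto $S^1(\mathfrak{f}_n) = \mathfrak{f}_n$. Then $p_n = \mathrm{cbh}_n$, i.e., $p_n(1) = 0$ and $p_n(x_{i_1}\cdots x_{i_k}) = \mathrm{CBH}_k(x_{i_1},\dots,x_{i_k})$ for every sequence $(i_1,\dots,i_k)$ of elements of $\{1,\dots,n\}$. -/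

import Mathlib

/-!
Common setup: a concrete model of the degree completion `F̂ₙ` of the free
associative algebra on `n` generators `x₁, …, xₙ` over a field `K` of
characteristic zero, as the space of formal (possibly infinite) `K`-linear
combinations of words in the letters `x₁, …, xₙ`, i.e. functions
`List (Fin n) → K` (the value at a word is its coefficient).  The product is
the (well-defined) convolution/concatenation product.  The free associative
algebra `Fₙ` sits inside as the finitely supported functions; the word `w`
corresponds to `delta w`, and `xᵢ = delta [i]`.
-/

noncomputable section

open Finset

namespace CBHPaper

/-- The degree completion `F̂ₙ` of the free associative algebra on `n`
generators over `K`: formal series of words, i.e. functions assigning to every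
word (a list over `Fin n`) its coefficient.  Addition and scalar
multiplication are pointwise (the `Pi` module structure). -/
abbrev Fhat (K : Type) (n : ℕ) : Type := List (Fin n) → K

variable {K : Type} [Field K] [CharZero K] {n : ℕ}

/-- The unit `1` of `F̂ₙ` (the empty word). -/
def oneF : Fhat K n := fun w => if w = [] then 1 else 0

/-- The word `w₀` (a product of generators), viewed as an element of `F̂ₙ`.
In particular `delta [i]` is the generator `xᵢ`. -/
def delta (w₀ : List (Fin n)) : Fhat K n := fun w => if w = w₀ then 1 else 0

/-- The (concatenation) product of `F̂ₙ`: the coefficient of a word `w` in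
`f * g` is the sum over all ways of splitting `w` as a concatenation `u ++ v`
of `f u * g v`. -/
def mulF (f g : Fhat K n) : Fhat K n :=
  fun w => ∑ i ∈ Finset.range (w.length + 1), f (w.take i) * g (w.drop i)

/-- Powers in `F̂ₙ`. -/
def powF (f : Fhat K n) : ℕ → Fhat K n
  | 0 => oneF
  | k + 1 => mulF f (powF f k)

/-- Ordered product of a finite list of elements of `F̂ₙ`. -/
def prodListF : List (Fhat K n) → Fhat K n
  | [] => oneF
  | f :: l => mulF f (prodListF l)

/-- The exponential series `exp f = ∑ₖ fᵏ/k!`; it is the genuine exponential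
when `f` has vanishing constant term (then the sum defining each coefficient
is finite, as accounted for by the truncation below). -/
def expF (f : Fhat K n) : Fhat K n :=
  fun w => ∑ k ∈ Finset.range (w.length + 1), (Nat.factorial k : K)⁻¹ * powF f k w

/-- The logarithm series `log X = ∑_{k ≥ 1} (-1)^{k+1} (X-1)ᵏ / k`; it is the
genuine logarithm (the inverse of `expF`) when `X` has constant term `1`. -/
def logF (X : Fhat K n) : Fhat K n :=
  fun w => ∑ k ∈ Finset.Icc 1 w.length,
    (-1 : K) ^ (k + 1) * (k : K)⁻¹ * powF (X - oneF) k w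

/-- `shuf w u v` is the number of ways of splitting the word `w` into a
subword equal to `u` and a complementary subword equal to `v`; these are the
structure constants of the coproduct `Δ` of `F̂ₙ` for which the generators are
primitive:  `Δ(w) = ∑_{S ⊆ positions of w} w|_S ⊗ w|_{Sᶜ}`. -/
def shuf : List (Fin n) → List (Fin n) → List (Fin n) → ℕ
  | [], u, v => if u = [] ∧ v = [] then 1 else 0
  | a :: w, u, v =>
      (match u with
        | b :: u' => if b = a then shuf w u' v else 0
        | [] => 0) +
      (match v with
        | b :: v' => if b = a then shuf w u v' else 0
        | [] => 0)

/-- The completed coproduct of `F̂ₙ` (for which the generators `xᵢ` are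
primitive), expressed coefficientwise: `coprodF X u v` is the coefficient of
`u ⊗ v` in `Δ(X)`.  Only words of length `|u| + |v|` contribute. -/
def coprodF (X : Fhat K n) (u v : List (Fin n)) : K :=
  ∑ c : Fin (u.length + v.length) → Fin n,
    (shuf (List.ofFn c) u v : K) * X (List.ofFn c)

/-- `X ∈ F̂ₙ` is group-like if `X = 1 + (higher degree)` and `Δ(X) = X ⊗ X`. -/
def IsGroupLike (X : Fhat K n) : Prop :=
  X [] = 1 ∧ ∀ u v, coprodF X u v = X u * X v

/-- The free Lie algebra `fₙ ⊆ Fₙ ⊆ F̂ₙ`: the smallest subspace containing the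
generators `xᵢ` and closed under the commutator bracket `[f,g] = fg - gf`. -/
inductive IsLieElem : Fhat K n → Prop
  | gen (i : Fin n) : IsLieElem (delta [i])
  | zero : IsLieElem 0
  | add {f g : Fhat K n} : IsLieElem f → IsLieElem g → IsLieElem (f + g)
  | smul (c : K) {f : Fhat K n} : IsLieElem f → IsLieElem (c • f)
  | lieBracket {f g : Fhat K n} : IsLieElem f → IsLieElem g →
      IsLieElem (mulF f g - mulF g f)

/-- The homogeneous component of degree `k` of an element of `F̂ₙ`. -/
def trunc (k : ℕ) (f : Fhat K n) : Fhat K n := fun w => if w.length = k then f w else 0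

/-- The completed free Lie algebra `f̂ₙ ⊆ F̂ₙ` (degree completion of `fₙ`):
every homogeneous component is a Lie element. -/
def IsLieElemHat (f : Fhat K n) : Prop := ∀ k, IsLieElem (trunc k f)

/-- `CBHₖ(x₁, …, xₖ)`: the multilinear part (the component of multidegree
`(1,…,1)`, i.e. the part supported on words of length `k` with pairwise
distinct letters) of `log (e^{x₁} ⋯ e^{xₖ})`, an element of `fₖ ⊆ F̂ₖ`. -/
def CBHuniv (K : Type) [Field K] [CharZero K] (k : ℕ) : Fhat K k :=
  fun w =>
    if w.length = k ∧ w.Nodup then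
      logF (prodListF (List.ofFn fun i : Fin k => expF (delta [i]))) w
    else 0

/-- The pushforward (substitution `yⱼ ↦ x_{φ(j)}`) along a map of generators
`φ : Fin k → Fin n`; it is the continuous algebra morphism `F̂ₖ → F̂ₙ` induced
by `φ`. -/
def pushF {k : ℕ} (φ : Fin k → Fin n) (f : Fhat K k) : Fhat K n :=
  fun v => ∑ u : Fin v.length → Fin k,
    if (List.ofFn u).map φ = v then f (List.ofFn u) else 0

/-- `CBH_k(x_{i₁}, …, x_{i_k})` for a word `w = (i₁, …, i_k)` over `Fin n`:
the image of the universal `CBHuniv k` under the substitution `yⱼ ↦ x_{iⱼ}`.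
This is `cbhₙ(x_{i₁} ⋯ x_{i_k})`. -/
def CBHword (w : List (Fin n)) : Fhat K n :=
  pushF w.get (CBHuniv K w.length)

/-- The completion `ĉbhₙ : F̂ₙ → f̂ₙ ⊆ F̂ₙ` of the linear map `cbhₙ` sending
the word `x_{i₁} ⋯ x_{i_k}` to `CBHₖ(x_{i₁}, …, x_{i_k})`:  writing
`X = ∑_w X(w)·w`, `ĉbhₙ(X) = ∑_w X(w)·CBHword w` (for each coefficient this
is a finite sum, since `CBHword w` is homogeneous of degree `|w|`). -/
def cbhHat (X : Fhat K n) : Fhat K n :=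
  fun v => ∑ c : Fin v.length → Fin n, X (List.ofFn c) * CBHword (List.ofFn c) v

/-- The symmetrized product `sym(z₁ ⊙ ⋯ ⊙ z_k) = (1/k!) ∑_σ z_{σ(1)} ⋯ z_{σ(k)}`.
As the `zᵢ` range over (completed) Lie elements, these elements span the image
of `Sᵏ` under the symmetrization map. -/
def symProd {k : ℕ} (z : Fin k → Fhat K n) : Fhat K n :=
  (Nat.factorial k : K)⁻¹ • ∑ σ : Equiv.Perm (Fin k), prodListF (List.ofFn (z ∘ σ))

end CBHPaper

namespace CBHPaper

section SymmetricProducts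

variable {K A : Type*} [Field K] [Ring A] [Algebra K A]

/-- Polarization identity: symmetrized products are signed sums of powers. -/
theorem sum_perm_prod_eq_sum_pow {k : ℕ} (z : Fin k → A) :
    ∑ σ : Equiv.Perm (Fin k), (List.ofFn (z ∘ σ)).prod =
      ∑ T : Finset (Fin k), (-1 : ℤ) ^ #T • (∑ i ∈ Tᶜ, z i) ^ k := by
  have expand (T : Finset (Fin k)) : (∑ i ∈ Tᶜ, z i) ^ k =
      ∑ r : Fin k → Fin k, if T ⊆ (univ.image r)ᶜ then (List.ofFn (z ∘ r)).prod else 0 := by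
    rw [← MultilinearMap.mkPiAlgebraFin_apply_const (R := ℤ),
      MultilinearMap.map_sum_finset (MultilinearMap.mkPiAlgebraFin ℤ k A) (fun _ i => z i)
        (fun _ => Tᶜ), ← Finset.sum_filter]
    refine Finset.sum_congr ?_ fun r _ => by
      simp [MultilinearMap.mkPiAlgebraFin_apply, Function.comp_def]
    ext r
    simp only [Fintype.mem_piFinset, mem_compl, mem_filter, mem_univ, true_and]
    constructor
    · intro h i hi
      simp only [mem_compl, mem_image, mem_univ, true_and, not_exists]
      rintro j rfl
      exact h j hi
    · intro h j hj
      have := h hj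
      simp at this
  simp_rw [expand, Finset.smul_sum]
  rw [Finset.sum_comm]
  have inner (r : Fin k → Fin k) :
      ∑ T : Finset (Fin k), (-1 : ℤ) ^ #T •
        (if T ⊆ (univ.image r)ᶜ then (List.ofFn (z ∘ r)).prod else 0) =
      if Function.Bijective r then (List.ofFn (z ∘ r)).prod else 0 := by
    simp_rw [smul_ite, smul_zero]
    rw [← Finset.sum_filter, ← Finset.sum_smul]
    have : (univ.filter fun T => T ⊆ (univ.image r)ᶜ) = ((univ.image r)ᶜ).powerset := by
      ext T; simp
    have hbij : (univ.image r)ᶜ = ∅ ↔ Function.Bijective r := by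
      rw [Finset.compl_eq_empty_iff, ← Finite.surjective_iff_bijective, Finset.eq_univ_iff_forall]
      simp [Function.Surjective]
    simp [this, Finset.sum_powerset_neg_one_pow_card, hbij]
  simp_rw [inner]
  rw [← Finset.sum_filter]
  refine Finset.sum_bij (fun σ _ => σ) (fun σ _ => mem_filter.2 ⟨mem_univ _, σ.bijective⟩)
    (fun σ _ τ _ h => DFunLike.coe_injective h)
    (fun r hr => ⟨Equiv.ofBijective r ((mem_filter.1 hr).2), mem_univ _, rfl⟩) (fun _ _ => rfl)

theorem prod_sub_prod_mem_of_perm (L : Submodule K A)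
    (hL : ∀ x ∈ L, ∀ y ∈ L, x * y - y * x ∈ L) {l l' : List A} (h : l.Perm l')
    (hl : ∀ x ∈ l, x ∈ L) :
    l.prod - l'.prod ∈ Submodule.span K
      {a | ∃ m : List A, (∀ x ∈ m, x ∈ L) ∧ m.length < l.length ∧ m.prod = a} := by
  induction h with
  | nil => simp
  | @cons x l₁ l₂ h ih =>
    have ih := ih fun y hy => hl y (List.mem_cons_of_mem _ hy)
    rw [List.prod_cons, List.prod_cons, ← mul_sub]
    have := Submodule.mem_map_of_mem (f := LinearMap.mulLeft K x) ih
    rw [Submodule.map_span] at this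
    refine Submodule.span_mono ?_ this
    rintro _ ⟨_, ⟨m, hm, hlen, rfl⟩, rfl⟩
    refine ⟨x :: m, ?_, by simpa using hlen, by simp⟩
    simpa using And.intro (hl x (by simp)) hm
  | swap x y l =>
    refine Submodule.subset_span ⟨(y * x - x * y) :: l, ?_, by simp, ?_⟩
    · intro w hw
      rcases List.mem_cons.1 hw with rfl | hw
      · exact hL _ (hl y (by simp)) _ (hl x (by simp))
      · exact hl w (by simp [hw])
    · simp only [List.prod_cons]
      noncomm_ring
  | trans h₁ h₂ ih₁ ih₂ =>
    have h := Submodule.add_mem _ (ih₁ hl)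
      (h₁.length_eq ▸ ih₂ fun x hx => hl x (h₁.mem_iff.2 hx))
    simpa using h

/-- The surjectivity half of Poincaré–Birkhoff–Witt: products of at most `N` elements of a Lie
subalgebra `L` are combinations of `j`-th powers with `j ≤ N`. -/
theorem prod_mem_span_pow [CharZero K] (L : Submodule K A)
    (hL : ∀ x ∈ L, ∀ y ∈ L, x * y - y * x ∈ L) (N : ℕ) (l : List A)
    (hl : ∀ x ∈ l, x ∈ L) (hN : l.length ≤ N) :
    l.prod ∈ Submodule.span K {a | ∃ z ∈ L, ∃ j ≤ N, z ^ j = a} := by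
  induction hk : l.length using Nat.strong_induction_on generalizing l with
  | _ k ih =>
  set V := Submodule.span K {a | ∃ z ∈ L, ∃ j ≤ N, z ^ j = a}
  have lower : Submodule.span K
      {a | ∃ m : List A, (∀ x ∈ m, x ∈ L) ∧ m.length < l.length ∧ m.prod = a} ≤ V := by
    rw [Submodule.span_le]
    rintro _ ⟨m, hm, hlen, rfl⟩
    exact ih _ (hk ▸ hlen) m hm (hlen.le.trans hN) rfl
  obtain ⟨z, rfl⟩ : ∃ z : Fin k → A, l = List.ofFn z := by
    subst hk
    exact ⟨l.get, (List.ofFn_get l).symm⟩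
  rw [List.length_ofFn] at hN
  have hz (i) : z i ∈ L := hl _ (by simp [List.mem_ofFn])
  have hsym : ∑ σ : Equiv.Perm (Fin k), (List.ofFn (z ∘ σ)).prod ∈ V := by
    rw [sum_perm_prod_eq_sum_pow]
    refine Submodule.sum_mem _ fun T _ => ?_
    have hT : (∑ i ∈ Tᶜ, z i) ^ k ∈ V :=
      Submodule.subset_span ⟨_, sum_mem fun i _ => hz i, k, hN, rfl⟩
    exact zsmul_mem hT _
  have hdiff : ∑ σ : Equiv.Perm (Fin k), ((List.ofFn z).prod - (List.ofFn (z ∘ σ)).prod) ∈ V :=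
    Submodule.sum_mem _ fun σ _ => lower <|
      prod_sub_prod_mem_of_perm L hL (σ.ofFn_comp_perm z).symm hl
  have hsum := Submodule.add_mem _ hsym hdiff
  rw [Finset.sum_sub_distrib, add_sub_cancel, Finset.sum_const, ← Nat.cast_smul_eq_nsmul K] at hsum
  refine (Submodule.smul_mem_iff _ ?_).1 hsum
  simp [Fintype.card_perm, Nat.factorial_ne_zero]

end SymmetricProducts

section Surjections

variable (K : Type*) [Field K] [CharZero K]

/-- The number of surjections from a `k`-element set to an `m`-element set, as `k!` times the
coefficient of `t ^ k` in `(exp t - 1) ^ m`. -/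
def surjCount (m k : ℕ) : K :=
  (k.factorial : K) * PowerSeries.coeff k ((PowerSeries.exp K - 1) ^ m)

theorem surjCount_zero (k : ℕ) : surjCount K 0 k = if k = 0 then 1 else 0 := by
  by_cases h : k = 0 <;> simp [surjCount, PowerSeries.coeff_one, h]

theorem surjCount_succ (m k : ℕ) :
    surjCount K (m + 1) k =
      ∑ j ∈ range (k + 1), (k.choose j : K) * ((if j = 0 then 0 else 1) * surjCount K m (k - j)) := by
  rw [surjCount, pow_succ', PowerSeries.coeff_mul, Finset.Nat.sum_antidiagonal_eq_sum_range_succ_mk,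
    Finset.mul_sum]
  refine Finset.sum_congr rfl fun j hj => ?_
  have hj : j ≤ k := Nat.lt_succ_iff.1 (mem_range.1 hj)
  rcases eq_or_ne j 0 with rfl | h0
  · simp
  · have h1 : PowerSeries.coeff j (PowerSeries.exp K - 1) = (j.factorial : K)⁻¹ := by
      simp [PowerSeries.coeff_exp, PowerSeries.coeff_one, h0]
    rw [h1, surjCount, Nat.cast_choose K hj]
    have := Nat.cast_ne_zero (R := K).2 j.factorial_ne_zero
    have := Nat.cast_ne_zero (R := K).2 (k - j).factorial_ne_zero
    simp only [h0, if_false]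
    field_simp

theorem surjCount_succ_succ (m k : ℕ) :
    surjCount K (m + 1) (k + 1) = (m + 1 : K) * (surjCount K (m + 1) k + surjCount K m k) := by
  have h : PowerSeries.derivative K ((PowerSeries.exp K - 1) ^ (m + 1)) =
      (m + 1 : K) • ((PowerSeries.exp K - 1) ^ (m + 1) + (PowerSeries.exp K - 1) ^ m) := by
    rw [PowerSeries.derivative_pow, map_sub, PowerSeries.derivative_exp,
      PowerSeries.derivative_one, PowerSeries.smul_eq_C_mul]
    simp only [add_tsub_cancel_right, map_add, map_natCast, map_one]
    push_cast
    ring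
  have h := congrArg (PowerSeries.coeff k) h
  rw [PowerSeries.coeff_derivative] at h
  simp only [map_smul, map_add, smul_eq_mul] at h
  rw [surjCount, surjCount, surjCount, Nat.factorial_succ]
  push_cast
  linear_combination (k.factorial : K) * h

theorem surjCount_eq_zero {m k : ℕ} (h : k < m) : surjCount K m k = 0 := by
  have hX : PowerSeries.X ∣ PowerSeries.exp K - 1 := by
    rw [PowerSeries.X_dvd_iff]
    simp
  rw [surjCount, PowerSeries.X_pow_dvd_iff.1 (pow_dvd_pow_of_dvd hX m) k h, mul_zero]

theorem sum_log_coeff_mul_surjCount {N k : ℕ} (hk : k ≤ N) :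
    ∑ m ∈ Icc 1 N, (-1 : K) ^ (m + 1) * (m : K)⁻¹ * surjCount K m k = if k = 1 then 1 else 0 := by
  rcases k with _ | k
  · simp only [zero_ne_one, if_false]
    exact Finset.sum_eq_zero fun m hm => by
      rw [surjCount_eq_zero K (by simp at hm; omega), mul_zero]
  · have partial_sum (M : ℕ) :
        ∑ m ∈ Icc 1 M, (-1 : K) ^ (m + 1) * (m : K)⁻¹ * surjCount K m (k + 1) =
          surjCount K 0 k - (-1) ^ M * surjCount K M k := by
      induction M with
      | zero => simp
      | succ M ih =>
        rw [Finset.sum_Icc_succ_top (by omega), ih, surjCount_succ_succ]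
        have : (M + 1 : K) ≠ 0 := Nat.cast_add_one_ne_zero M
        push_cast
        field_simp
        ring_nf
    rw [partial_sum, surjCount_eq_zero K hk, surjCount_zero]
    simp

end Surjections

section FreeAlgebra

open TensorProduct

variable {K : Type*} [Field K] {α β : Type*}

/-- The free associative algebra on `α`, with its basis of words. -/
abbrev Words (K : Type*) [Field K] (α : Type*) := MonoidAlgebra K (FreeMonoid α)

variable (K) in
/-- A word, as a basis element of the free associative algebra. -/
def word (l : List α) : Words K α := MonoidAlgebra.of K _ (FreeMonoid.ofList l)

theorem word_nil : word K ([] : List α) = 1 := rfl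

theorem word_append (l l' : List α) : word K (l ++ l') = word K l * word K l' := by
  simp [word, FreeMonoid.ofList_append]

theorem word_cons (a : α) (l : List α) : word K (a :: l) = word K [a] * word K l :=
  word_append [a] l

theorem word_eq_prod (l : List α) : word K l = (l.map fun a => word K [a]).prod := by
  induction l with
  | nil => simp [word_nil]
  | cons a l ih => rw [word_cons, ih, List.map_cons, List.prod_cons]

theorem Words.hom_ext {M : Type*} [AddCommGroup M] [Module K M] {f g : Words K α →ₗ[K] M}
    (h : ∀ l, f (word K l) = g (word K l)) : f = g :=
  MonoidAlgebra.lhom_ext' fun l => LinearMap.ext_ring (h l.toList)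

/-- The algebra morphism out of the free algebra with prescribed values on the generators. -/
def Words.lift {B : Type*} [Ring B] [Algebra K B] (f : α → B) : Words K α →ₐ[K] B :=
  MonoidAlgebra.lift K B _ (FreeMonoid.lift f)

theorem Words.lift_word {B : Type*} [Ring B] [Algebra K B] (f : α → B) (l : List α) :
    Words.lift f (word K l) = (l.map f).prod := by
  rw [word, Words.lift, MonoidAlgebra.lift_of, FreeMonoid.lift_ofList]

variable (K α) in
/-- The coproduct for which the generators are primitive. -/
def comul : Words K α →ₐ[K] Words K α ⊗[K] Words K α :=
  Words.lift fun a => word K [a] ⊗ₜ 1 + 1 ⊗ₜ word K [a]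

/-- The augmentation. -/
def counit : Words K α →ₐ[K] K := Words.lift fun _ => 0

/-- The projection of the free algebra onto its augmentation ideal. -/
def augProj : Words K α →ₗ[K] Words K α :=
  LinearMap.id - LinearMap.toSpanSingleton K _ 1 ∘ₗ counit.toLinearMap

/-- The convolution powers of `augProj`. -/
def convPow : ℕ → Words K α →ₗ[K] Words K α
  | 0 => LinearMap.toSpanSingleton K _ 1 ∘ₗ counit.toLinearMap
  | m + 1 => LinearMap.mul' K _ ∘ₗ TensorProduct.map augProj (convPow m) ∘ₗ (comul K α).toLinearMap

/-- Partial sums of the convolution logarithm of the identity of the free algebra. -/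
def logConv (N : ℕ) : Words K α →ₗ[K] Words K α :=
  ∑ m ∈ Icc 1 N, ((-1 : K) ^ (m + 1) * (m : K)⁻¹) • convPow m

theorem counit_word (l : List α) : counit (word K l) = if l = [] then 1 else 0 := by
  rw [counit, Words.lift_word]
  cases l <;> simp

theorem augProj_word (l : List α) : augProj (word K l) = if l = [] then 0 else word K l := by
  simp only [augProj, LinearMap.sub_apply, LinearMap.id_apply, LinearMap.comp_apply,
    AlgHom.toLinearMap_apply, counit_word,
    LinearMap.toSpanSingleton_apply]
  split_ifs with h <;> simp [h, word_nil]

/-- Primitive elements of the free algebra with zero augmentation. -/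
def IsPrim (z : Words K α) : Prop :=
  comul K α z = z ⊗ₜ 1 + 1 ⊗ₜ z ∧ counit z = 0

theorem IsPrim.commutator {x y : Words K α} (hx : IsPrim x) (hy : IsPrim y) :
    IsPrim (x * y - y * x) := by
  refine ⟨?_, by simp [hx.2, hy.2]⟩
  rw [map_sub, map_mul, map_mul, hx.1, hy.1]
  simp only [add_mul, mul_add, Algebra.TensorProduct.tmul_mul_tmul, one_mul, mul_one, sub_tmul,
    tmul_sub]
  abel

theorem isPrim_word_singleton (a : α) : IsPrim (word K [a]) :=
  ⟨by simp [comul, Words.lift_word], by simp [counit_word]⟩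

theorem augProj_pow {z : Words K α} (hz : IsPrim z) (j : ℕ) :
    augProj (z ^ j) = (if j = 0 then 0 else 1 : K) • z ^ j := by
  simp only [augProj, LinearMap.sub_apply, LinearMap.id_apply, LinearMap.comp_apply,
    AlgHom.toLinearMap_apply, map_pow, hz.2,
    LinearMap.toSpanSingleton_apply]
  split_ifs with h <;> simp [h]

theorem convPow_pow [CharZero K] {z : Words K α} (hz : IsPrim z) (m k : ℕ) :
    convPow m (z ^ k) = surjCount K m k • z ^ k := by
  induction m generalizing k with
  | zero =>
    simp only [convPow, LinearMap.comp_apply, AlgHom.toLinearMap_apply, map_pow, hz.2,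
      surjCount_zero, LinearMap.toSpanSingleton_apply]
    split_ifs with h <;> simp [h]
  | succ m ih =>
    have hcomm : Commute (z ⊗ₜ[K] (1 : Words K α)) (1 ⊗ₜ[K] z) := by
      simp [Commute, SemiconjBy]
    simp only [convPow, LinearMap.comp_apply, AlgHom.toLinearMap_apply, map_pow, hz.1]
    rw [hcomm.add_pow, map_sum, map_sum, surjCount_succ, Finset.sum_smul]
    refine Finset.sum_congr rfl fun j hj => ?_
    have hj : j ≤ k := Nat.lt_succ_iff.1 (mem_range.1 hj)
    rw [(Nat.cast_commute (k.choose j) _).symm.eq, ← nsmul_eq_mul, map_nsmul, map_nsmul,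
      Algebra.TensorProduct.tmul_pow, Algebra.TensorProduct.tmul_pow,
      Algebra.TensorProduct.tmul_mul_tmul, one_pow, one_pow, mul_one, one_mul,
      TensorProduct.map_tmul, LinearMap.mul'_apply, ih, augProj_pow hz, smul_mul_smul_comm,
      ← pow_add, Nat.add_sub_cancel' hj, ← Nat.cast_smul_eq_nsmul K, smul_smul]

theorem logConv_pow [CharZero K] {z : Words K α} (hz : IsPrim z) {N k : ℕ} (hk : k ≤ N) :
    logConv N (z ^ k) = if k = 1 then z else 0 := by
  simp only [logConv, LinearMap.sum_apply, LinearMap.smul_apply, convPow_pow hz, smul_smul]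
  rw [← Finset.sum_smul, sum_log_coeff_mul_surjCount K hk]
  split_ifs with h <;> simp [h]

/-- All ways of splitting a word into a subword and its complementary subword. -/
def splits : List α → List (List α × List α)
  | [] => [([], [])]
  | a :: l => (splits l).map (fun p => (a :: p.1, p.2)) ++ (splits l).map fun p => (p.1, a :: p.2)

theorem splits_map (φ : α → β) (l : List α) :
    splits (l.map φ) = (splits l).map fun p => (p.1.map φ, p.2.map φ) := by
  induction l with
  | nil => rfl
  | cons a l ih => simp [splits, ih, Function.comp_def]

theorem comul_word (l : List α) :
    comul K α (word K l) = ((splits l).map fun p => word K p.1 ⊗ₜ[K] word K p.2).sum := by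
  induction l with
  | nil => simp [word_nil, splits, Algebra.TensorProduct.one_def]
  | cons a l ih =>
    rw [word_cons, map_mul, ih, (isPrim_word_singleton a).1, add_mul, ← List.sum_map_mul_left,
      ← List.sum_map_mul_left]
    rw [splits, List.map_append, List.sum_append, List.map_map, List.map_map]
    congr 2 <;> refine List.map_congr_left fun p _ => ?_ <;> simp [← word_cons]

theorem convPow_succ_word (m : ℕ) (l : List α) :
    convPow (m + 1) (word K l) =
      ((splits l).map fun p => augProj (word K p.1) * convPow m (word K p.2)).sum := by
  simp only [convPow, LinearMap.comp_apply, AlgHom.toLinearMap_apply, comul_word, map_list_sum,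
    List.map_map]
  rfl

/-- The morphism of free algebras induced by a map of generators. -/
def Words.map (φ : α → β) : Words K α →ₐ[K] Words K β := Words.lift fun a => word K [φ a]

theorem Words.map_word (φ : α → β) (l : List α) : Words.map φ (word K l) = word K (l.map φ) := by
  rw [Words.map, Words.lift_word, word_eq_prod (l.map φ), List.map_map]
  rfl

theorem convPow_word_map (φ : α → β) (m : ℕ) (l : List α) :
    convPow m (word K (l.map φ)) = Words.map φ (convPow m (word K l)) := by
  induction m generalizing l with
  | zero => simp [convPow, counit_word]
  | succ m ih =>
    rw [convPow_succ_word, convPow_succ_word, splits_map, map_list_sum, List.map_map, List.map_map]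
    congr 1
    refine List.map_congr_left fun p _ => ?_
    simp only [Function.comp_apply, map_mul, ih, augProj_word, List.map_eq_nil_iff]
    split_ifs <;> simp [Words.map_word]

end FreeAlgebra

section Comparison

variable {K : Type} [Field K] {n : ℕ}

/-- The inclusion of the free algebra into its degree completion. -/
def toFhat : Words K (Fin n) →ₗ[K] Fhat K n where
  toFun a w := a.coeff (FreeMonoid.ofList w)
  map_add' _ _ := rfl
  map_smul' _ _ := rfl

theorem toFhat_word (l : List (Fin n)) : toFhat (word K l) = delta l := by
  funext w
  classical
  change (MonoidAlgebra.single (FreeMonoid.ofList l) (1 : K)).coeff (FreeMonoid.ofList w) = _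
  rw [MonoidAlgebra.coeff_single, Finsupp.single_apply, delta]
  simp [eq_comm]

theorem toFhat_one : toFhat (1 : Words K (Fin n)) = oneF := toFhat_word []

theorem mulF_delta_delta (u v : List (Fin n)) :
    mulF (delta u : Fhat K n) (delta v) = delta (u ++ v) := by
  funext w
  simp only [mulF, delta]
  by_cases h : w = u ++ v
  · subst h
    rw [Finset.sum_eq_single u.length]
    · simp
    · intro i hi hne
      simp only [mem_range] at hi
      rw [if_neg, zero_mul]
      intro h
      have := congrArg List.length h
      rw [List.length_take] at this
      omega
    · simp
  · rw [if_neg h]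
    refine Finset.sum_eq_zero fun i _ => ?_
    by_cases h₁ : w.take i = u
    · have h₂ : w.drop i ≠ v := fun h₂ => h (by rw [← h₁, ← h₂, List.take_append_drop])
      rw [if_neg h₂, mul_zero]
    · rw [if_neg h₁, zero_mul]

/-- `mulF` as a bilinear map. -/
def mulFBilin : Fhat K n →ₗ[K] Fhat K n →ₗ[K] Fhat K n :=
  LinearMap.mk₂ K mulF
    (fun f f' g => by funext w; simp [mulF, add_mul, Finset.sum_add_distrib])
    (fun c f g => by funext w; simp [mulF, mul_assoc, Finset.mul_sum])
    (fun f g g' => by funext w; simp [mulF, mul_add, Finset.sum_add_distrib])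
    (fun c f g => by funext w; simp [mulF, mul_left_comm, Finset.mul_sum])

theorem toFhat_mul (a b : Words K (Fin n)) : toFhat (a * b) = mulF (toFhat a) (toFhat b) := by
  have h : (LinearMap.mul K (Words K (Fin n))).compr₂ toFhat =
      mulFBilin.compl₁₂ toFhat toFhat := by
    refine Words.hom_ext fun u => Words.hom_ext fun v => ?_
    change toFhat (word K u * word K v) = mulF (toFhat (word K u)) (toFhat (word K v))
    rw [← word_append, toFhat_word, toFhat_word, toFhat_word, mulF_delta_delta]
  exact LinearMap.congr_fun (LinearMap.congr_fun h a) b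

theorem symProd_const [CharZero K] (z : Words K (Fin n)) (k : ℕ) :
    symProd (fun _ : Fin k => toFhat z) = toFhat (z ^ k) := by
  have h : prodListF (List.replicate k (toFhat z)) = toFhat (z ^ k) := by
    induction k with
    | zero => rw [pow_zero, toFhat_one]; rfl
    | succ k ih => rw [List.replicate_succ, prodListF, ih, pow_succ', toFhat_mul]
  have hk : (k.factorial : K) ≠ 0 := Nat.cast_ne_zero.2 k.factorial_ne_zero
  simp only [symProd, Function.comp_def, List.ofFn_const, h, Finset.sum_const, Finset.card_univ,
    Fintype.card_perm, Fintype.card_fin]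
  rw [← Nat.cast_smul_eq_nsmul K, smul_smul, inv_mul_cancel₀ hk, one_smul]

/-- The preimage in the free algebra of the free Lie algebra, cut down to primitive elements. -/
def lieWords : Submodule K (Words K (Fin n)) where
  carrier := {a | IsPrim a ∧ IsLieElem (toFhat a)}
  zero_mem' := ⟨by simp [IsPrim], by simpa using IsLieElem.zero⟩
  add_mem' := by
    rintro a b ⟨ha, ha'⟩ ⟨hb, hb'⟩
    refine ⟨⟨?_, by simp [ha.2, hb.2]⟩, by simpa using ha'.add hb'⟩
    rw [map_add, ha.1, hb.1, TensorProduct.add_tmul, TensorProduct.tmul_add]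
    abel
  smul_mem' := by
    rintro c a ⟨ha, ha'⟩
    refine ⟨⟨?_, by simp [ha.2]⟩, by simpa using ha'.smul c⟩
    rw [map_smul, ha.1, smul_add, TensorProduct.smul_tmul', TensorProduct.tmul_smul]

theorem commutator_mem_lieWords {x y : Words K (Fin n)} (hx : x ∈ lieWords)
    (hy : y ∈ lieWords) : x * y - y * x ∈ lieWords := by
  refine ⟨hx.1.commutator hy.1, ?_⟩
  rw [map_sub, toFhat_mul, toFhat_mul]
  exact hx.2.lieBracket hy.2

theorem word_singleton_mem_lieWords (i : Fin n) : word K [i] ∈ lieWords :=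
  ⟨isPrim_word_singleton i, toFhat_word (K := K) [i] ▸ IsLieElem.gen i⟩

theorem pushF_delta {k : ℕ} (φ : Fin k → Fin n) (l : List (Fin k)) :
    pushF φ (delta l : Fhat K k) = delta (l.map φ) := by
  funext v
  simp only [pushF, delta]
  split_ifs with h
  · subst h
    have h₀ : List.ofFn (fun i : Fin (l.map φ).length => l[i.1]'(by simpa using i.2)) = l :=
      List.ext_getElem (by simp) (by simp)
    rw [Finset.sum_eq_single (fun i : Fin (l.map φ).length => l[i.1]'(by simpa using i.2))]
    · simp only [h₀, if_true]
    · intro u _ hu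
      have : List.ofFn u ≠ l := fun h => hu (List.ofFn_injective (h.trans h₀.symm))
      simp only [if_neg this, ite_self]
    · simp
  · refine Finset.sum_eq_zero fun u _ => ?_
    split_ifs with h₁ h₂
    · exact absurd (h₂ ▸ h₁.symm) h
    · rfl
    · rfl

/-- `pushF` as a linear map. -/
def pushFLin {k : ℕ} (φ : Fin k → Fin n) : Fhat K k →ₗ[K] Fhat K n where
  toFun := pushF φ
  map_add' f g := by
    funext v
    simp only [pushF, Pi.add_apply, ← Finset.sum_add_distrib]
    refine Finset.sum_congr rfl fun u _ => ?_
    split_ifs <;> simp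
  map_smul' c f := by
    funext v
    simp [pushF, Finset.mul_sum]

theorem toFhat_map {k : ℕ} (φ : Fin k → Fin n) (a : Words K (Fin k)) :
    toFhat (Words.map φ a) = pushF φ (toFhat a) := by
  have h : toFhat ∘ₗ (Words.map φ).toLinearMap = pushFLin (K := K) φ ∘ₗ toFhat := by
    refine Words.hom_ext fun l => ?_
    change toFhat (Words.map φ (word K l)) = pushF φ (toFhat (word K l))
    rw [Words.map_word, toFhat_word, toFhat_word, pushF_delta]
  exact LinearMap.congr_fun h a

theorem logConv_word_map {k : ℕ} (φ : Fin k → Fin n) (N : ℕ) (l : List (Fin k)) :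
    logConv N (word K (l.map φ)) = Words.map φ (logConv N (word K l)) := by
  simp [logConv, convPow_word_map]

theorem powF_delta_singleton (i : Fin n) (j : ℕ) :
    powF (delta [i] : Fhat K n) j = delta (List.replicate j i) := by
  induction j with
  | zero => rfl
  | succ j ih => rw [powF, ih, mulF_delta_delta]; rfl

theorem expF_delta_singleton_apply [CharZero K] (i : Fin n) {u : List (Fin n)} (hu : u.Nodup) :
    expF (delta [i] : Fhat K n) u = if u = [] ∨ u = [i] then 1 else 0 := by
  simp only [expF, powF_delta_singleton]
  match u, hu with
  | [], _ => simp [delta]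
  | [a], _ => simp [delta, Finset.sum_range_succ]
  | a :: b :: u, hu =>
    rw [if_neg (by simp)]
    refine Finset.sum_eq_zero fun j _ => ?_
    rw [delta, if_neg, mul_zero]
    intro h
    rw [h, List.nodup_replicate] at hu
    have := congrArg List.length h
    simp at this
    omega

theorem mulF_cons (f g : Fhat K n) (a : Fin n) (u : List (Fin n)) :
    mulF f g (a :: u) =
      f [] * g (a :: u) + ∑ i ∈ range (u.length + 1), f (a :: u.take i) * g (u.drop i) := by
  rw [mulF, List.length_cons, Finset.sum_range_succ', add_comm]
  rfl

theorem prodListF_exp_apply [CharZero K] {l u : List (Fin n)} (hl : l.Nodup) (hu : u.Nodup) :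
    prodListF (l.map fun i => expF (delta [i] : Fhat K n)) u = if u.Sublist l then 1 else 0 := by
  induction l generalizing u with
  | nil => simp [prodListF, oneF]
  | cons i l ih =>
    rw [List.nodup_cons] at hl
    rw [List.map_cons, prodListF]
    rcases u with _ | ⟨a, u⟩
    · simp [mulF, ih hl.2, expF_delta_singleton_apply]
    · have hu' := (List.nodup_cons.1 hu).2
      rw [mulF_cons, Finset.sum_eq_single 0, ih hl.2 hu, expF_delta_singleton_apply i (by simp),
        expF_delta_singleton_apply i (by simp), List.take_zero, List.drop_zero, ih hl.2 hu']
      · have hcons : (a :: u).Sublist (i :: l) ↔ (a :: u).Sublist l ∨ a = i ∧ u.Sublist l :=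
          List.cons_sublist_cons'
        by_cases h₁ : (a :: u).Sublist l
        · have : a ≠ i := by
            rintro rfl
            exact hl.1 (h₁.subset (by simp))
          simp [h₁, this, hcons]
        · by_cases h₂ : a = i
          · subst h₂
            simp [h₁, hcons]
          · simp [h₁, h₂, hcons]
      · intro j hj h0
        have hj : j ≤ u.length := Nat.lt_succ_iff.1 (mem_range.1 hj)
        have hnd : (a :: u.take j).Nodup := hu.sublist ((List.take_sublist j u).cons_cons a)
        rw [expF_delta_singleton_apply i hnd, if_neg, zero_mul]
        rintro (h | h)
        · simp at h
        · have := congrArg List.length h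
          simp at this
          grind
      · simp

theorem sublist_finRange_iff {k : ℕ} {u : List (Fin k)} :
    u.Sublist (List.finRange k) ↔ u.Pairwise (· < ·) := by
  constructor
  · intro h
    exact (List.pairwise_lt_finRange k).sublist h
  · intro h
    exact List.sublist_of_subperm_of_pairwise
      (List.subperm_of_subset (h.imp ne_of_lt) fun x _ => List.mem_finRange x) h
      (List.pairwise_lt_finRange k)

theorem perm_finRange_iff {k : ℕ} {u : List (Fin k)} :
    u.Perm (List.finRange k) ↔ u.length = k ∧ u.Nodup := by
  constructor
  · intro h
    exact ⟨by simpa using h.length_eq, h.nodup_iff.2 (List.nodup_finRange k)⟩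
  · rintro ⟨hlen, hnd⟩
    exact (List.subperm_of_subset hnd fun x _ => List.mem_finRange x).perm_of_length_le
      (by simp [hlen])

theorem sum_splits_eq {l : List (Fin n)} (hl : l.Pairwise (· < ·)) (t r : List (Fin n)) :
    ((splits l).map fun p => if p.1 = t ∧ p.2.Perm r then (1 : K) else 0).sum =
      if t.Pairwise (· < ·) ∧ (t ++ r).Perm l then 1 else 0 := by
  induction l generalizing t r with
  | nil =>
    rcases t with _ | ⟨b, t⟩
    · simp [splits, List.perm_comm]
    · simp [splits]
  | cons a l ih =>
    rw [List.pairwise_cons] at hl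
    have ih := ih hl.2
    have ha : a ∉ l := fun h => lt_irrefl a (hl.1 a h)
    simp only [splits, List.map_append, List.sum_append, List.map_map, Function.comp_def,
      List.cons_perm_iff_perm_erase]
    by_cases har : a ∈ r
    · have hfirst : ∀ t', t'.Pairwise (· < ·) ∧ (t' ++ r).Perm l → False := fun t' h =>
        ha (h.2.subset (by simp [har]))
      have h₁ : ((splits l).map fun p =>
          if a :: p.1 = t ∧ p.2.Perm r then (1 : K) else 0).sum = 0 := by
        rcases t with _ | ⟨b, t⟩
        · simp
        · by_cases hb : a = b
          · simp only [hb, List.cons.injEq, true_and, ih t r, if_neg (hfirst t)]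
          · simp [hb]
      have h₂ : (t ++ r).Perm (a :: l) ↔ (t ++ r.erase a).Perm l := by
        have : (t ++ r).Perm (a :: (t ++ r.erase a)) :=
          ((List.perm_cons_erase har).append_left t).trans List.perm_middle
        rw [this.congr_left, List.perm_cons]
      simp only [h₁, har, true_and, ih t (r.erase a), zero_add, h₂]
    · simp only [har, false_and, and_false, if_false, List.map_const', List.sum_replicate,
        smul_zero, add_zero]
      rcases t with _ | ⟨b, t⟩
      · rw [if_neg (fun h => har (h.2.symm.subset (by simp)))]
        simp
      · by_cases hb : a = b
        · subst hb
          simp only [List.cons.injEq, true_and, ih t r, List.cons_append, List.perm_cons,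
            List.pairwise_cons]
          congr 1
          refine propext ⟨fun h => ⟨⟨fun x hx => hl.1 x (h.2.subset (by simp [hx])), h.1⟩, h.2⟩,
            fun h => ⟨h.1.2, h.2⟩⟩
        · rw [if_neg]
          · simp [hb]
          · rintro ⟨hs, hp⟩
            have hbl : b ∈ l := by
              have : b ∈ a :: l := hp.subset (by simp)
              simpa [Ne.symm hb] using this
            have hat : a ∈ t := by
              have : a ∈ b :: t ++ r := hp.symm.subset (by simp)
              simpa [hb, har] using this
            exact lt_asymm (hl.1 b hbl) ((List.pairwise_cons.1 hs).1 a hat)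

theorem snd_sublist_of_mem_splits {l : List (Fin n)} {p : List (Fin n) × List (Fin n)}
    (hp : p ∈ splits l) : p.2.Sublist l := by
  induction l generalizing p with
  | nil => simp_all [splits]
  | cons a l ih =>
    simp only [splits, List.mem_append, List.mem_map] at hp
    rcases hp with ⟨q, hq, rfl⟩ | ⟨q, hq, rfl⟩
    · exact (ih hq).cons a
    · exact (ih hq).cons_cons a

theorem toFhat_augProj_word_apply (s t : List (Fin n)) :
    toFhat (augProj (word K s)) t = if s = t then (if t = [] then 0 else 1) else 0 := by
  rw [augProj_word]
  by_cases hs : s = []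
  · subst hs
    by_cases ht : t = [] <;> simp [ht]
  · rw [if_neg hs, toFhat_word, delta]
    by_cases h : s = t
    · subst h; simp [hs]
    · simp [h, Ne.symm h]

theorem list_sum_map_finset_sum {ι κ M : Type*} [AddCommMonoid M] (L : List ι) (S : Finset κ)
    (f : κ → ι → M) : (L.map fun p => ∑ i ∈ S, f i p).sum = ∑ i ∈ S, (L.map (f i)).sum := by
  induction L with
  | nil => simp
  | cons a L ih => simp [ih, Finset.sum_add_distrib]

/-- On permutations of an increasing word, the convolution powers of `augProj` are the powers of
`X - 1`, for any series `X` that on words without repetition is the indicator of increasing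
words. -/
theorem toFhat_convPow_word_apply {X : Fhat K n}
    (hX : ∀ t : List (Fin n), t.Nodup → X t = if t.Pairwise (· < ·) then 1 else 0)
    (m : ℕ) {l : List (Fin n)} (hl : l.Pairwise (· < ·)) (u : List (Fin n)) :
    toFhat (convPow m (word K l)) u = if u.Perm l then powF (X - oneF) m u else 0 := by
  induction m generalizing l u with
  | zero =>
    have h : toFhat (convPow 0 (word K l)) u = (if l = [] then 1 else 0) * oneF u := by
      simp only [convPow, LinearMap.comp_apply, AlgHom.toLinearMap_apply, counit_word,
        LinearMap.toSpanSingleton_apply, map_smul, toFhat_one, Pi.smul_apply, smul_eq_mul]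
    rw [h, powF, oneF]
    rcases l with _ | ⟨a, l⟩
    · by_cases hu : u = [] <;> simp [hu]
    · by_cases hu : u = [] <;> simp [hu]
  | succ m ih =>
    have h₁ : toFhat (convPow (m + 1) (word K l)) u =
        ∑ i ∈ range (u.length + 1),
          (if u.take i = [] then 0 else 1) * powF (X - oneF) m (u.drop i) *
            if (u.take i).Pairwise (· < ·) ∧ u.Perm l then 1 else 0 := by
      rw [convPow_succ_word]
      change (LinearMap.proj u ∘ₗ toFhat) _ = _
      rw [map_list_sum, List.map_map]
      have hterm : ∀ p ∈ splits l,
          ((LinearMap.proj u ∘ₗ toFhat) ∘ fun p : List (Fin n) × List (Fin n) =>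
            augProj (word K p.1) * convPow m (word K p.2)) p =
          ∑ i ∈ range (u.length + 1),
            (if u.take i = [] then 0 else 1) * powF (X - oneF) m (u.drop i) *
              if p.1 = u.take i ∧ p.2.Perm (u.drop i) then 1 else 0 := by
        intro p hp
        simp only [Function.comp_apply, LinearMap.comp_apply, LinearMap.proj_apply, toFhat_mul,
          mulF]
        refine Finset.sum_congr rfl fun i _ => ?_
        rw [toFhat_augProj_word_apply, ih (hl.sublist (snd_sublist_of_mem_splits hp))]
        have hcomm : (u.drop i).Perm p.2 ↔ p.2.Perm (u.drop i) := List.perm_comm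
        by_cases h₁ : p.1 = u.take i <;> by_cases h₂ : p.2.Perm (u.drop i) <;>
          simp [h₁, h₂, hcomm]
      rw [List.map_congr_left hterm, list_sum_map_finset_sum]
      refine Finset.sum_congr rfl fun i _ => ?_
      rw [List.sum_map_mul_left, sum_splits_eq hl, List.take_append_drop]
    rw [h₁]
    split_ifs with hu
    · have hnd : u.Nodup := hu.nodup_iff.2 (hl.imp ne_of_lt)
      rw [powF, mulF]
      refine Finset.sum_congr rfl fun i _ => ?_
      rw [Pi.sub_apply, hX _ (hnd.sublist (List.take_sublist i u)), oneF]
      by_cases ht : u.take i = []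
      · simp [ht]
      · simp [ht, hu]
    · simp [hu]

theorem CBHuniv_eq [CharZero K] (k : ℕ) :
    CBHuniv K k = toFhat (logConv k (word K (List.finRange k))) := by
  funext u
  set X : Fhat K k := prodListF (List.ofFn fun i : Fin k => expF (delta [i])) with hXdef
  have hX (t : List (Fin k)) (ht : t.Nodup) : X t = if t.Pairwise (· < ·) then 1 else 0 := by
    rw [hXdef, List.ofFn_eq_map, prodListF_exp_apply (List.nodup_finRange k) ht]
    simp only [sublist_finRange_iff]
  have hconv (m : ℕ) :=
    toFhat_convPow_word_apply hX m (List.pairwise_lt_finRange k) u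
  simp only [perm_finRange_iff] at hconv
  simp only [logConv, LinearMap.sum_apply, LinearMap.smul_apply, map_sum, map_smul,
    Finset.sum_apply, Pi.smul_apply, hconv, smul_eq_mul, CBHuniv, ← hXdef]
  split_ifs with h
  · rw [logF, h.1]
  · simp

theorem CBHword_eq [CharZero K] (w : List (Fin n)) :
    CBHword w = toFhat (logConv w.length (word K w)) := by
  have hw : word K w = word K ((List.finRange w.length).map w.get) := by
    rw [← List.ofFn_eq_map, List.ofFn_get]
  rw [CBHword, CBHuniv_eq, hw, logConv_word_map, toFhat_map]

end Comparison

/-- **Lemma (`pₙ = cbhₙ`).**  By Poincaré–Birkhoff–Witt, `Fₙ = U(fₙ)` and the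
symmetrization `sym : S(fₙ) → Fₙ` is a linear isomorphism; since
`S(fₙ) = ⊕ₖ Sᵏ(fₙ)` and `sym(Sᵏ(fₙ))` is spanned by the symmetrized products
`symProd z` of `k`-tuples `z` of Lie elements, the map
`pₙ = (proj onto S¹(fₙ) = fₙ) ∘ sym⁻¹ : Fₙ → fₙ` is exactly characterized by
the hypotheses below: `p` is linear, `p(1) = 0` (i.e. `p ∘ sym` kills `S⁰`),
`p(z) = z` for `z ∈ fₙ` (i.e. `p ∘ sym` is the identity on `S¹`), and
`p ∘ sym` kills `Sᵏ` for `k ≥ 2`.  The conclusion: `pₙ = cbhₙ`, i.e.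
`p(x_{i₁} ⋯ x_{i_k}) = CBHₖ(x_{i₁}, …, x_{i_k})` for every word
`(i₁, …, i_k)` in the generators (the case of the empty word being
`p(1) = 0 = cbhₙ(1)`). -/
theorem p_eq_cbh {K : Type} [Field K] [CharZero K] {n : ℕ}
    (p : Fhat K n →ₗ[K] Fhat K n)
    (h0 : p oneF = 0)
    (h1 : ∀ z : Fhat K n, IsLieElem z → p z = z)
    (hk : ∀ k : ℕ, 2 ≤ k → ∀ z : Fin k → Fhat K n,
      (∀ i, IsLieElem (z i)) → p (symProd z) = 0) :
    ∀ w : List (Fin n), p (delta w) = CBHword w := by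
  intro w
  have hw : word K w ∈ Submodule.span K
      {a | ∃ z ∈ lieWords (K := K) (n := n), ∃ j ≤ w.length, z ^ j = a} := by
    rw [word_eq_prod]
    refine prod_mem_span_pow _ (fun x hx y hy => commutator_mem_lieWords hx hy) _ _ ?_ (by simp)
    simp only [List.mem_map]
    rintro _ ⟨i, _, rfl⟩
    exact word_singleton_mem_lieWords i
  have hp : ∀ a ∈ Submodule.span K
      {a | ∃ z ∈ lieWords (K := K) (n := n), ∃ j ≤ w.length, z ^ j = a},
      (p ∘ₗ toFhat) a = (toFhat ∘ₗ logConv w.length) a := by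
    refine LinearMap.eqOn_span ?_
    rintro _ ⟨z, hz, j, hj, rfl⟩
    simp only [LinearMap.comp_apply, logConv_pow hz.1 hj]
    rcases lt_trichotomy j 1 with h | rfl | h
    · obtain rfl : j = 0 := by omega
      simp [toFhat_one, h0]
    · simp [h1 _ hz.2]
    · rw [← symProd_const, hk j h _ fun _ => hz.2, if_neg (by omega), map_zero]
  rw [CBHword_eq, ← toFhat_word]
  exact hp _ hw

end CBHPaper
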